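/- Let H be a real inner product space, let l, q₀ ∈ H with ‖l‖ = ‖q₀‖ = 1, and assume l and q₀ are linearly independent. Let L = span{l, q₀}, let P_L denote the orthogonal projection onto L, and set l⊥ = l − ⟨l, q₀⟩·q₀ and q₀⊥ = q₀ − ⟨l, q₀⟩·l (so ‖l⊥‖ = ‖q₀⊥‖ ≠ 0). Define K : H → H by Kφ = φ − (2/‖l − q₀‖²)·⟨l − q₀, φ⟩·(l − q₀). Then for every φ ∈ H, Kφ = (φ − P_L φ) + ⟨l, φ⟩·q₀ + (1/‖l⊥‖²)·⟨q₀⊥, φ⟩·l⊥. -/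

import Mathlib

/-!
Write `P φ = a • l + b • q₀` and `c = ⟪l, q₀⟫`. Since `φ - P φ` is orthogonal to `l` and `q₀`,
`⟪l, φ⟫ = a + b c` and `⟪q₀, φ⟫ = a c + b`; moreover `‖l - q₀‖² = 2 (1 - c)` and
`‖l⊥‖² = 1 - c²`, the latter nonzero by linear independence. Hence the scalar coefficients in the
definition of `K` and in the claimed formula reduce to `a - b` and `b` respectively, and both sides
equal `φ - (a - b) • (l - q₀)`.
-/

open scoped RealInnerProductSpace

/-- Lemma 3(ii) of the paper.
Coordinate representation of the Householder operator `K`: with `L = span{l, q₀}`,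
`P` the orthogonal projection onto `L`, `l⊥ = l − ⟪l,q₀⟫q₀`, `q₀⊥ = q₀ − ⟪l,q₀⟫l`,
one has `Kφ = (φ − Pφ) + ⟪l,φ⟫ q₀ + (1/‖l⊥‖²) ⟪q₀⊥,φ⟫ l⊥`. -/
theorem householder_coordinate_representation
    {H : Type*} [NormedAddCommGroup H] [InnerProductSpace ℝ H]
    (l q₀ : H) (hl : ‖l‖ = 1) (hq₀ : ‖q₀‖ = 1)
    (hind : LinearIndependent ℝ ![l, q₀])
    (L : Submodule ℝ H) (hL : L = Submodule.span ℝ ({l, q₀} : Set H))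
    (P : H → H) (hP : ∀ φ, P φ ∈ L ∧ φ - P φ ∈ Lᗮ)
    (lp q₀p : H) (hlp : lp = l - ⟪l, q₀⟫ • q₀) (hq₀p : q₀p = q₀ - ⟪l, q₀⟫ • l)
    (K : H → H)
    (hK : ∀ φ, K φ = φ - ((2 / ‖l - q₀‖ ^ 2) * ⟪l - q₀, φ⟫) • (l - q₀)) :
    ∀ φ, K φ = (φ - P φ) + ⟪l, φ⟫ • q₀ + ((1 / ‖lp‖ ^ 2) * ⟪q₀p, φ⟫) • lp := by
  intro φ
  obtain ⟨hPL, hPo⟩ := hP φ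
  rw [hL] at hPL
  obtain ⟨a, b, hab⟩ := Submodule.mem_span_pair.mp hPL
  have hll : ⟪l, l⟫ = 1 := by rw [real_inner_self_eq_norm_sq, hl]; norm_num
  have hqq : ⟪q₀, q₀⟫ = 1 := by rw [real_inner_self_eq_norm_sq, hq₀]; norm_num
  have hql : ⟪q₀, l⟫ = ⟪l, q₀⟫ := real_inner_comm _ _
  have hlφ : ⟪l, φ⟫ = a + b * ⟪l, q₀⟫ := by
    have h : ⟪l, φ - P φ⟫ = 0 :=
      (Submodule.mem_orthogonal _ _).mp hPo l (hL ▸ Submodule.subset_span (by simp))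
    rw [← hab, inner_sub_right, inner_add_right, inner_smul_right, inner_smul_right, hll] at h
    linarith
  have hqφ : ⟪q₀, φ⟫ = a * ⟪l, q₀⟫ + b := by
    have h : ⟪q₀, φ - P φ⟫ = 0 :=
      (Submodule.mem_orthogonal _ _).mp hPo q₀ (hL ▸ Submodule.subset_span (by simp))
    rw [← hab, inner_sub_right, inner_add_right, inner_smul_right, inner_smul_right, hqq, hql] at h
    linarith
  have hnorm : ‖l - q₀‖ ^ 2 = 2 * (1 - ⟪l, q₀⟫) := by
    rw [norm_sub_sq_real, hl, hq₀]; ring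
  have hlp_sq : ‖lp‖ ^ 2 = 1 - ⟪l, q₀⟫ ^ 2 := by
    rw [hlp, ← real_inner_self_eq_norm_sq]
    simp only [inner_sub_left, inner_sub_right, real_inner_smul_left, inner_smul_right,
      hll, hqq, hql]
    ring
  have hlp_ne : lp ≠ 0 := by
    intro h
    have h1 : (1 : ℝ) • l + (-⟪l, q₀⟫) • q₀ = 0 := by
      rw [one_smul, neg_smul, ← sub_eq_add_neg, ← hlp, h]
    exact one_ne_zero (LinearIndependent.pair_iff.mp hind _ _ h1).1
  have hsq_ne : 1 - ⟪l, q₀⟫ ^ 2 ≠ 0 := by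
    rw [← hlp_sq]; exact pow_ne_zero 2 (norm_ne_zero_iff.mpr hlp_ne)
  have hne : 1 - ⟪l, q₀⟫ ≠ 0 := by
    intro h
    apply hsq_ne
    linear_combination (1 + ⟪l, q₀⟫) * h
  have hcK : 2 / ‖l - q₀‖ ^ 2 * ⟪l - q₀, φ⟫ = a - b := by
    rw [hnorm, inner_sub_left, hlφ, hqφ]
    field_simp
    ring
  have hcP : 1 / ‖lp‖ ^ 2 * ⟪q₀p, φ⟫ = b := by
    rw [hlp_sq, hq₀p, inner_sub_left, real_inner_smul_left, hlφ, hqφ]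
    field_simp
    ring
  rw [hK, hcK, hcP, hlφ, ← hab, hlp]
  module
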